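/- Let a be an indeterminate (work over F = ℚ(q,a)). For all 2 ≤ i, j ≤ 2n−1, the following two identities hold in V^{⊗4}: (i) R̂(q^{−2})_{12} R̂(q^{−2})_{34} R̄(aq^{−2})_{14} R̄(a)_{24} R̄(a)_{13} R̄(aq^{2})_{23} (e_1⊗e_i⊗e_1⊗e_j) = ((aq^{−1} − q)/(aq − q^{−1})) · R̂(q^{−2})_{12} R̂(q^{−2})_{34} R̄^{[n−1]}(a)_{24} (e_1⊗e_i⊗e_1⊗e_j); (ii) (e_1⊗e_i⊗e_1⊗e_j)ᵀ R̄(aq^{2})_{23} R̄(a)_{13} R̄(a)_{24} R̄(aq^{−2})_{14} R̂(q^{−2})_{12} R̂(q^{−2})_{34} = ((aq^{−1} − q)/(aq − q^{−1})) · (e_1⊗e_i⊗e_1⊗e_j)ᵀ R̄^{[n−1]}(a)_{24} R̂(q^{−2})_{12} R̂(q^{−2})_{34}. -/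

import Mathlib

/-!
Write `o` for the first index, and call an index middle if it is neither `o` nor `o′`.

The operator `R̂(q⁻²)` kills `e_o⊗e_o` and sends `e_k⊗e_o` to `-q⁻¹` times the image of
`e_o⊗e_k` for `k` middle; the same holds for its rows, with `-q` in place of `-q⁻¹`. Hence each
row (or column) of `R̂₁₂R̂₃₄` is a functional `L` on `V^{⊗4}` that vanishes on vectors with `e_o⊗e_o`
in positions 1, 2 or in positions 3, 4, and that is antisymmetric, up to the factor `c`, when an
`e_o` is moved past a middle basis vector.

Expanding `R̄₁₄ R̄₂₄ R̄₁₃ R̄₂₃ (e_o⊗e_i⊗e_o⊗e_j)` with the explicit columns of `R̄` and applying `L`,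
every term either dies or becomes a multiple of some `L (e_o⊗e_k⊗e_o⊗e_l)` with `k`, `l` middle.
The summand through `e_o⊗e_{o′}` in positions 2, 4 survives too, and accounts for the change of `ξ`
into `ξq²`. This is `fusion_reduction`; it needs only the sparsity pattern `RShape`, shared by `R̄`
and its transpose, so both identities follow from it. The remaining comparison of coefficients is
a rational identity for each `i, j, k, l`, proved in `key_col` and `key_row`; `ξ` enters it as a
free parameter. No Yang–Baxter equation is used.
-/

noncomputable section

open Matrix Kronecker

/-- `primeIdx n i` is the 0-based version of the primed index `i′ = 2n+1−i` (1-based). -/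
def primeIdx (n : ℕ) (i : Fin (2*n)) : Fin (2*n) :=
  ⟨2*n - 1 - i.val, by have := i.isLt; omega⟩

/-- `barIdx n i` is `ī`: `n−i` for `1 ≤ i ≤ n` and `n+1−i` for `n+1 ≤ i ≤ 2n` (1-based). -/
def barIdx (n : ℕ) (i : Fin (2*n)) : ℤ :=
  if i.val < n then (n : ℤ) - 1 - i.val else (n : ℤ) - i.val

/-- `ξ = −q^{−2n}`. -/
def xiVal {F : Type*} [Field F] (n : ℕ) (q : F) : F := -q ^ (-(2 * (n : ℤ)))

/-- The entries `a_{ij}(u)` of the exceptional block of the R-matrix. -/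
def aEnt {F : Type*} [Field F] (n : ℕ) (q xi u : F) (i j : Fin (2*n)) : F :=
  if i = j then (q ^ (-2 : ℤ) * u - xi) * (u - 1)
  else if i.val < j.val then
    (q ^ (-2 : ℤ) - 1) *
      (q ^ (barIdx n i - barIdx n j) * xi * (u - 1)
        - (if i = primeIdx n j then (1 : F) else 0) * (u - xi))
  else
    (q ^ (-2 : ℤ) - 1) * u *
      (q ^ (barIdx n i - barIdx n j) * (u - 1)
        - (if i = primeIdx n j then (1 : F) else 0) * (u - xi))

/-- The R-matrix `R̄(u)` of type `A^{(2)}_{2n−1}` (with the parameter `ξ` explicit). -/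
def Rbar {F : Type*} [Field F] (n : ℕ) (q xi u : F) :
    Matrix (Fin (2*n) × Fin (2*n)) (Fin (2*n) × Fin (2*n)) F :=
  fun p r =>
    (if p.1 = p.2 ∧ p.1 = r.1 ∧ p.1 = r.2 then (1 : F) else 0)
    + (if p.1 = r.1 ∧ p.2 = r.2 ∧ p.1 ≠ p.2 ∧ p.1 ≠ primeIdx n p.2 then
        (u - 1) / (q * u - q⁻¹) else 0)
    + (if p.1 = r.2 ∧ p.2 = r.1 ∧ p.2.val < p.1.val ∧ p.1 ≠ primeIdx n p.2 then
        (q - q⁻¹) / (q * u - q⁻¹) else 0)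
    + (if p.1 = r.2 ∧ p.2 = r.1 ∧ p.1.val < p.2.val ∧ p.1 ≠ primeIdx n p.2 then
        (q - q⁻¹) * u / (q * u - q⁻¹) else 0)
    + (if p.1 = primeIdx n p.2 ∧ r.1 = primeIdx n r.2 then
        aEnt n q xi u p.2 r.2 / ((u - q ^ (-2 : ℤ)) * (u - xi)) else 0)

/-- Primed partial transpose in the first tensor factor. -/
def pt1 {F : Type*} [Field F] (n : ℕ)
    (X : Matrix (Fin (2*n) × Fin (2*n)) (Fin (2*n) × Fin (2*n)) F) :
    Matrix (Fin (2*n) × Fin (2*n)) (Fin (2*n) × Fin (2*n)) F :=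
  fun p r => X (primeIdx n r.1, p.2) (primeIdx n p.1, r.2)

/-- `R̂(u) = ((qu−q^{−1})/(u−1))·R̄(u)` with the removable singularity at `u = q^{−2}`
cancelled in each entry. -/
def RhatF {F : Type*} [Field F] (n : ℕ) (q xi u : F) :
    Matrix (Fin (2*n) × Fin (2*n)) (Fin (2*n) × Fin (2*n)) F :=
  fun p r =>
    (if p.1 = p.2 ∧ p.1 = r.1 ∧ p.1 = r.2 then (q * u - q⁻¹) / (u - 1) else 0)
    + (if p.1 = r.1 ∧ p.2 = r.2 ∧ p.1 ≠ p.2 ∧ p.1 ≠ primeIdx n p.2 then (1 : F) else 0)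
    + (if p.1 = r.2 ∧ p.2 = r.1 ∧ p.2.val < p.1.val ∧ p.1 ≠ primeIdx n p.2 then
        (q - q⁻¹) / (u - 1) else 0)
    + (if p.1 = r.2 ∧ p.2 = r.1 ∧ p.1.val < p.2.val ∧ p.1 ≠ primeIdx n p.2 then
        (q - q⁻¹) * u / (u - 1) else 0)
    + (if p.1 = primeIdx n p.2 ∧ r.1 = primeIdx n r.2 then
        q * aEnt n q xi u p.2 r.2 / ((u - 1) * (u - xi)) else 0)

/-- The R-matrix `R̄^{[n−1]}(u)`: same formula as `R̄(u)` but with index set `{2,…,2n−1}`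
and with `ξ` replaced by `ξq²`; it kills basis vectors with an index in `{1, 2n}`. -/
def RbarSub {F : Type*} [Field F] (n : ℕ) (q u : F) :
    Matrix (Fin (2*n) × Fin (2*n)) (Fin (2*n) × Fin (2*n)) F :=
  fun p r =>
    if 0 < p.1.val ∧ p.1.val < 2*n - 1 ∧ 0 < p.2.val ∧ p.2.val < 2*n - 1
        ∧ 0 < r.1.val ∧ r.1.val < 2*n - 1 ∧ 0 < r.2.val ∧ r.2.val < 2*n - 1 then
      Rbar n q (xiVal n q * q ^ 2) u p r
    else 0

section Ops

variable {F : Type*} [Field F] (n : ℕ)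

/-- Fourfold tensor index. -/
abbrev I4 (n : ℕ) := Fin (2*n) × Fin (2*n) × Fin (2*n) × Fin (2*n)

/-- `X_{12}` on the fourfold tensor product. -/
def op12 (X : Matrix (Fin (2*n) × Fin (2*n)) (Fin (2*n) × Fin (2*n)) F) :
    Matrix (I4 n) (I4 n) F :=
  fun p r => X (p.1, p.2.1) (r.1, r.2.1)
    * (if p.2.2.1 = r.2.2.1 ∧ p.2.2.2 = r.2.2.2 then 1 else 0)

/-- `X_{34}` on the fourfold tensor product. -/
def op34 (X : Matrix (Fin (2*n) × Fin (2*n)) (Fin (2*n) × Fin (2*n)) F) :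
    Matrix (I4 n) (I4 n) F :=
  fun p r => (if p.1 = r.1 ∧ p.2.1 = r.2.1 then 1 else 0)
    * X (p.2.2.1, p.2.2.2) (r.2.2.1, r.2.2.2)

/-- `X_{13}` on the fourfold tensor product. -/
def op13 (X : Matrix (Fin (2*n) × Fin (2*n)) (Fin (2*n) × Fin (2*n)) F) :
    Matrix (I4 n) (I4 n) F :=
  fun p r => X (p.1, p.2.2.1) (r.1, r.2.2.1)
    * (if p.2.1 = r.2.1 ∧ p.2.2.2 = r.2.2.2 then 1 else 0)

/-- `X_{14}` on the fourfold tensor product. -/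
def op14 (X : Matrix (Fin (2*n) × Fin (2*n)) (Fin (2*n) × Fin (2*n)) F) :
    Matrix (I4 n) (I4 n) F :=
  fun p r => X (p.1, p.2.2.2) (r.1, r.2.2.2)
    * (if p.2.1 = r.2.1 ∧ p.2.2.1 = r.2.2.1 then 1 else 0)

/-- `X_{23}` on the fourfold tensor product. -/
def op23 (X : Matrix (Fin (2*n) × Fin (2*n)) (Fin (2*n) × Fin (2*n)) F) :
    Matrix (I4 n) (I4 n) F :=
  fun p r => X (p.2.1, p.2.2.1) (r.2.1, r.2.2.1)
    * (if p.1 = r.1 ∧ p.2.2.2 = r.2.2.2 then 1 else 0)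

/-- `X_{24}` on the fourfold tensor product. -/
def op24 (X : Matrix (Fin (2*n) × Fin (2*n)) (Fin (2*n) × Fin (2*n)) F) :
    Matrix (I4 n) (I4 n) F :=
  fun p r => X (p.2.1, p.2.2.2) (r.2.1, r.2.2.2)
    * (if p.1 = r.1 ∧ p.2.2.1 = r.2.2.1 then 1 else 0)

end Ops


/-! ### Operators acting on two of the four tensor factors -/

theorem vecMul_op14 {F : Type*} [Field F] {n : ℕ}
    (X : Matrix (Fin (2*n) × Fin (2*n)) (Fin (2*n) × Fin (2*n)) F) (L : I4 n → F)
    (x y z w : Fin (2*n)) :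
    (L ᵥ* op14 n X) (x, y, z, w) = ∑ k, ∑ l, L (k, y, z, l) * X (k, l) (x, w) := by
  simp [vecMul, dotProduct, op14, Fintype.sum_prod_type, ite_and]

theorem vecMul_op24 {F : Type*} [Field F] {n : ℕ}
    (X : Matrix (Fin (2*n) × Fin (2*n)) (Fin (2*n) × Fin (2*n)) F) (L : I4 n → F)
    (x y z w : Fin (2*n)) :
    (L ᵥ* op24 n X) (x, y, z, w) = ∑ k, ∑ l, L (x, k, z, l) * X (k, l) (y, w) := by
  simp [vecMul, dotProduct, op24, Fintype.sum_prod_type, ite_and]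

theorem vecMul_op13 {F : Type*} [Field F] {n : ℕ}
    (X : Matrix (Fin (2*n) × Fin (2*n)) (Fin (2*n) × Fin (2*n)) F) (L : I4 n → F)
    (x y z w : Fin (2*n)) :
    (L ᵥ* op13 n X) (x, y, z, w) = ∑ k, ∑ l, L (k, y, l, w) * X (k, l) (x, z) := by
  simp [vecMul, dotProduct, op13, Fintype.sum_prod_type, ite_and]

theorem vecMul_op23 {F : Type*} [Field F] {n : ℕ}
    (X : Matrix (Fin (2*n) × Fin (2*n)) (Fin (2*n) × Fin (2*n)) F) (L : I4 n → F)
    (x y z w : Fin (2*n)) :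
    (L ᵥ* op23 n X) (x, y, z, w) = ∑ k, ∑ l, L (x, k, l, w) * X (k, l) (y, z) := by
  simp [vecMul, dotProduct, op23, Fintype.sum_prod_type, ite_and]

/-! ### Reduction to a scalar identity -/

/-- The index lies strictly between the two extreme ones (`2 ≤ k ≤ 2n−1` in 1-based terms). -/
def Mid {n : ℕ} (k : Fin (2*n)) : Prop := 0 < k.val ∧ k.val < 2*n - 1

instance {n : ℕ} (k : Fin (2*n)) : Decidable (Mid k) := inferInstanceAs (Decidable (_ ∧ _))

/-- The sparsity pattern common to `R̄(u)` and its transpose, relative to the first index `o`: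
the columns `e_o⊗e_o`, `e_o⊗e_m`, `e_m⊗e_o` (`m` strictly between the extreme indices) are
explicit, and the columns `e_i⊗e_j` and `e_o⊗e_{o′}` are supported on pairs of middle indices
together with `(o, o′)` and `(o′, o)`. -/
structure RShape {F : Type*} [Field F] {n : ℕ} (o : Fin (2*n))
    (S : Matrix (Fin (2*n) × Fin (2*n)) (Fin (2*n) × Fin (2*n)) F) (α B G : F) : Prop where
  oo : ∀ k l, S (k, l) (o, o) = if k = o ∧ l = o then 1 else 0
  mo : ∀ k l m, Mid m → S (k, l) (m, o) =
    (if k = m ∧ l = o then α else 0) + (if k = o ∧ l = m then B else 0)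
  om : ∀ k l m, Mid m → S (k, l) (o, m) =
    (if k = o ∧ l = m then α else 0) + (if k = m ∧ l = o then G else 0)
  ij : ∀ k l i j, Mid i → Mid j → ¬ (Mid k ∧ Mid l) → ¬ (k = o ∧ l = primeIdx n o) →
    ¬ (k = primeIdx n o ∧ l = o) → S (k, l) (i, j) = 0
  op : ∀ k l, ¬ (Mid k ∧ Mid l) → ¬ (k = o ∧ l = primeIdx n o) →
    ¬ (k = primeIdx n o ∧ l = o) → S (k, l) (o, primeIdx n o) = 0

section Sums
variable {F : Type*} [Field F] {n : ℕ} {o : Fin (2*n)}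
  {S : Matrix (Fin (2*n) × Fin (2*n)) (Fin (2*n) × Fin (2*n)) F} {α B G : F}

theorem RShape.sum_oo (h : RShape o S α B G) (f : Fin (2*n) → Fin (2*n) → F) :
    ∑ k, ∑ l, f k l * S (k, l) (o, o) = f o o := by
  simp [h.oo, ite_and]

theorem RShape.sum_mo (h : RShape o S α B G) (f : Fin (2*n) → Fin (2*n) → F)
    (m : Fin (2*n)) (hm : Mid m) :
    ∑ k, ∑ l, f k l * S (k, l) (m, o) = f m o * α + f o m * B := by
  simp [h.mo _ _ _ hm, ite_and, mul_add, Finset.sum_add_distrib]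

theorem RShape.sum_om (h : RShape o S α B G) (f : Fin (2*n) → Fin (2*n) → F)
    (m : Fin (2*n)) (hm : Mid m) :
    ∑ k, ∑ l, f k l * S (k, l) (o, m) = f o m * α + f m o * G := by
  simp [h.om _ _ _ hm, ite_and, mul_add, Finset.sum_add_distrib]

/-- A double sum supported on pairs of middle indices and on the two extreme pairs. -/
theorem sum_split (ho : o.val = 0) (g s : Fin (2*n) → Fin (2*n) → F)
    (hs : ∀ k l, ¬ (Mid k ∧ Mid l) → ¬ (k = o ∧ l = primeIdx n o) →
      ¬ (k = primeIdx n o ∧ l = o) → s k l = 0) :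
    ∑ k, ∑ l, g k l * s k l =
      (∑ k, ∑ l, if Mid k ∧ Mid l then g k l * s k l else 0)
      + g o (primeIdx n o) * s o (primeIdx n o) + g (primeIdx n o) o * s (primeIdx n o) o := by
  have h : ∀ k l, g k l * s k l = (if Mid k ∧ Mid l then g k l * s k l else 0)
      + (if k = o ∧ l = primeIdx n o then g k l * s k l else 0)
      + (if k = primeIdx n o ∧ l = o then g k l * s k l else 0) := by
    intro k l
    by_cases h1 : Mid k ∧ Mid l
    · have h2 : k ≠ o := by rintro rfl; simp [Mid, ho] at h1
      have h3 : l ≠ o := by rintro rfl; simp [Mid, ho] at h1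
      simp [h1, h2, h3]
    · by_cases h2 : k = o ∧ l = primeIdx n o
      · have h3 : k ≠ primeIdx n o := by
          have := o.isLt
          rw [h2.1, Ne, Fin.ext_iff]; simp [primeIdx]; omega
        simp only [h1, if_false, if_pos h2, h3, false_and]; ring
      · by_cases h3 : k = primeIdx n o ∧ l = o
        · simp only [h1, if_false, if_pos h3, h2]; ring
        · simp [hs k l h1 h2 h3]
  rw [Finset.sum_congr rfl fun k _ => Finset.sum_congr rfl fun l _ => h k l]
  simp [Finset.sum_add_distrib, ite_and]

/-- Reduction of a fusion identity to a scalar one. `L` is a linear functional on `V^{⊗4}`,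
given by its values on basis vectors, with the antisymmetry of `R̂₁₂R̂₃₄` along the index `o`.
It turns `S₁₄ S₂₄ S₁₃ S₂₃ (e_o⊗e_i⊗e_o⊗e_j)` into a combination of the values
`L (o, k, o, l)` with `k`, `l` middle indices, whose coefficients are the left-hand sides of
`hkey`. -/
theorem fusion_reduction {S₁ S₂ S₃ T : Matrix (Fin (2*n) × Fin (2*n)) (Fin (2*n) × Fin (2*n)) F}
    {α₁ α₂ α₃ B₁ B₂ B₃ G₁ G₂ G₃ c κ : F} (ho : o.val = 0)
    (h₁ : RShape o S₁ α₁ B₁ G₁) (h₂ : RShape o S₂ α₂ B₂ G₂) (h₃ : RShape o S₃ α₃ B₃ G₃)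
    (L : I4 n → F)
    (hL1 : ∀ x y, L (o, o, x, y) = 0) (hL2 : ∀ x y, L (x, y, o, o) = 0)
    (hL3 : ∀ k x y, Mid k → L (k, o, x, y) = c * L (o, k, x, y))
    (hL4 : ∀ k x y, Mid k → L (x, y, k, o) = c * L (x, y, o, k))
    (i j : Fin (2*n)) (hi : Mid i) (hj : Mid j)
    (hT : ∀ k l, ¬ (Mid k ∧ Mid l) → T (k, l) (i, j) = 0)
    (hkey : ∀ k l, Mid k → Mid l →
      α₃ * α₁ * S₂ (k, l) (i, j)
        + α₃ * c * S₂ (o, primeIdx n o) (i, j) * S₁ (k, l) (o, primeIdx n o)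
        + B₃ * G₂ * α₂ * c * S₁ (k, l) (i, j)
        + (if k = j ∧ l = i then
            B₃ * (α₂ ^ 2 * G₁ * c ^ 2 + α₂ * G₂ * c + G₂ ^ 2 * B₁) else 0)
      = κ * T (k, l) (i, j)) :
    (L ᵥ* (op14 n S₁ * op24 n S₂ * op13 n S₂ * op23 n S₃)) (o, i, o, j)
      = κ * (L ᵥ* op24 n T) (o, i, o, j) := by
  -- the values of `L ∘ S₁₄` on the vectors produced by the three other factors
  have e1 : (L ᵥ* op14 n S₁) (o, o, i, j) = c ^ 2 * G₁ * L (o, j, o, i) := by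
    rw [vecMul_op14, h₁.sum_om (fun k l => L (k, o, i, l)) j hj, hL1, hL3 _ _ _ hj, hL4 _ _ _ hi]
    ring
  have e2 : (L ᵥ* op14 n S₁) (o, j, i, o) = c * L (o, j, o, i) := by
    rw [vecMul_op14, h₁.sum_oo (fun k l => L (k, j, i, l)), hL4 _ _ _ hi]
  have e3 : (L ᵥ* op14 n S₁) (i, j, o, o) = B₁ * L (o, j, o, i) := by
    rw [vecMul_op14, h₁.sum_mo (fun k l => L (k, j, o, l)) i hi, hL2]
    ring
  have e4 : (L ᵥ* op14 n S₁) (i, o, o, j) =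
      ∑ k, ∑ l, if Mid k ∧ Mid l then c * L (o, k, o, l) * S₁ (k, l) (i, j) else 0 := by
    rw [vecMul_op14, sum_split ho (fun k l => L (k, o, o, l)) _
      (fun k l => h₁.ij k l i j hi hj), hL1, hL2]
    simp only [zero_mul, add_zero]
    refine Finset.sum_congr rfl fun k _ => Finset.sum_congr rfl fun l _ => ?_
    split_ifs with h
    · rw [hL3 _ _ _ h.1]
    · rfl
  have e5 : (L ᵥ* op14 n S₁) (o, o, o, primeIdx n o) =
      ∑ k, ∑ l, if Mid k ∧ Mid l then c * L (o, k, o, l) * S₁ (k, l) (o, primeIdx n o) else 0 := by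
    rw [vecMul_op14, sum_split ho (fun k l => L (k, o, o, l)) _ h₁.op, hL1, hL2]
    simp only [zero_mul, add_zero]
    refine Finset.sum_congr rfl fun k _ => Finset.sum_congr rfl fun l _ => ?_
    split_ifs with h
    · rw [hL3 _ _ _ h.1]
    · rfl
  have e6 : (L ᵥ* op14 n S₁) (o, primeIdx n o, o, o) = 0 := by
    rw [vecMul_op14, h₁.sum_oo (fun k l => L (k, primeIdx n o, o, l)), hL2]
  have e7 : ∀ k l, Mid l → (L ᵥ* op14 n S₁) (o, k, o, l) = α₁ * L (o, k, o, l) := by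
    intro k l hl
    rw [vecMul_op14, h₁.sum_om (fun x y => L (x, k, o, y)) l hl, hL2]
    ring
  have e8 : L (o, j, o, i) * (B₃ * (α₂ ^ 2 * G₁ * c ^ 2 + α₂ * G₂ * c + G₂ ^ 2 * B₁)) =
      ∑ k, ∑ l, if Mid k ∧ Mid l then L (o, k, o, l) * (if k = j ∧ l = i then
        B₃ * (α₂ ^ 2 * G₁ * c ^ 2 + α₂ * G₂ * c + G₂ ^ 2 * B₁) else 0) else 0 := by
    rw [Finset.sum_eq_single j, Finset.sum_eq_single i]
    · simp [hi, hj]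
    · intro b _ hb; simp [hb]
    · simp
    · intro b _ hb; simp [hb]
    · simp
  rw [← vecMul_vecMul, ← vecMul_vecMul, ← vecMul_vecMul, vecMul_op23,
    h₃.sum_mo (fun k l => (((L ᵥ* op14 n S₁) ᵥ* op24 n S₂) ᵥ* op13 n S₂) (o, k, l, j)) i hi,
    vecMul_op13, vecMul_op13,
    h₂.sum_oo (fun k l => ((L ᵥ* op14 n S₁) ᵥ* op24 n S₂) (k, i, l, j)),
    h₂.sum_om (fun k l => ((L ᵥ* op14 n S₁) ᵥ* op24 n S₂) (k, o, l, j)) i hi,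
    vecMul_op24, vecMul_op24, vecMul_op24,
    sum_split ho (fun k l => (L ᵥ* op14 n S₁) (o, k, o, l)) _ (fun k l => h₂.ij k l i j hi hj),
    h₂.sum_om (fun k l => (L ᵥ* op14 n S₁) (o, k, i, l)) j hj,
    h₂.sum_om (fun k l => (L ᵥ* op14 n S₁) (i, k, o, l)) j hj, e1, e2, e3, e6, vecMul_op24]
  have e9 : ∑ k, ∑ l, L (o, k, o, l) * T (k, l) (i, j) =
      ∑ k, ∑ l, if Mid k ∧ Mid l then L (o, k, o, l) * T (k, l) (i, j) else 0 := by
    refine Finset.sum_congr rfl fun k _ => Finset.sum_congr rfl fun l _ => ?_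
    split_ifs with h
    · rfl
    · rw [hT k l h, mul_zero]
  have e10 : (∑ k, ∑ l, if Mid k ∧ Mid l then
        (L ᵥ* op14 n S₁) (o, k, o, l) * S₂ (k, l) (i, j) else 0) =
      ∑ k, ∑ l, if Mid k ∧ Mid l then α₁ * L (o, k, o, l) * S₂ (k, l) (i, j) else 0 := by
    refine Finset.sum_congr rfl fun k _ => Finset.sum_congr rfl fun l _ => ?_
    split_ifs with h
    · rw [e7 _ _ h.2]
    · rfl
  rw [e9]
  refine Eq.trans (b := α₃ * (∑ k, ∑ l, if Mid k ∧ Mid l then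
        (L ᵥ* op14 n S₁) (o, k, o, l) * S₂ (k, l) (i, j) else 0)
      + α₃ * S₂ (o, primeIdx n o) (i, j) * (L ᵥ* op14 n S₁) (o, o, o, primeIdx n o)
      + B₃ * G₂ * α₂ * (L ᵥ* op14 n S₁) (i, o, o, j)
      + L (o, j, o, i) * (B₃ * (α₂ ^ 2 * G₁ * c ^ 2 + α₂ * G₂ * c + G₂ ^ 2 * B₁))) (by ring) ?_
  rw [e10, e4, e5, e8]
  simp only [Finset.mul_sum, ← Finset.sum_add_distrib]
  refine Finset.sum_congr rfl fun k _ => Finset.sum_congr rfl fun l _ => ?_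
  by_cases h : Mid k ∧ Mid l
  · simp only [if_pos h]
    linear_combination L (o, k, o, l) * hkey k l h.1 h.2
  · simp only [if_neg h]; ring

end Sums

/-! ### Entries of the R-matrices -/

section Entries
variable {F : Type*} [Field F] {n : ℕ} {o : Fin (2*n)}

theorem primeIdx_primeIdx (i : Fin (2*n)) : primeIdx n (primeIdx n i) = i := by
  have := i.isLt
  ext; simp [primeIdx]; omega

theorem primeIdx_ne (i : Fin (2*n)) : primeIdx n i ≠ i := by
  have := i.isLt
  rw [Ne, Fin.ext_iff]; simp [primeIdx]; omega

theorem Mid.ne (ho : o.val = 0) {m : Fin (2*n)} (hm : Mid m) : m ≠ o := by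
  rintro rfl; simp [Mid, ho] at hm

theorem Mid.ne_prime (ho : o.val = 0) {m : Fin (2*n)} (hm : Mid m) : m ≠ primeIdx n o := by
  rintro rfl; simp [Mid, primeIdx, ho] at hm

theorem Mid.prime {m : Fin (2*n)} (hm : Mid m) : Mid (primeIdx n m) := by
  obtain ⟨h1, h2⟩ := hm
  constructor <;> simp only [primeIdx] <;> omega

theorem mid_of_ne (ho : o.val = 0) {m : Fin (2*n)} (h1 : m ≠ o) (h2 : m ≠ primeIdx n o) :
    Mid m := by
  rw [Ne, Fin.ext_iff] at h1 h2
  have := m.isLt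
  simp only [primeIdx, ho] at h1 h2
  constructor <;> omega

theorem eq_primeIdx_comm {i j : Fin (2*n)} : i = primeIdx n j ↔ j = primeIdx n i :=
  ⟨fun h => by rw [h, primeIdx_primeIdx], fun h => by rw [h, primeIdx_primeIdx]⟩

/-- On a pair of indices that are not primes of each other, `R̄(u)` involves only the
permutation-type terms. -/
theorem Rbar_col (q xi u : F) (k l i j : Fin (2*n)) (h : i ≠ primeIdx n j) :
    Rbar n q xi u (k, l) (i, j) =
      if i = j then (if k = i ∧ l = i then 1 else 0)
      else (if k = i ∧ l = j then (u - 1) / (q * u - q⁻¹) else 0)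
        + (if k = j ∧ l = i then
            (if i.val < j.val then (q - q⁻¹) / (q * u - q⁻¹)
              else (q - q⁻¹) * u / (q * u - q⁻¹)) else 0) := by
  have h' : j ≠ primeIdx n i := fun e => h (eq_primeIdx_comm.1 e)
  simp only [Rbar, h, and_false, if_false, add_zero]
  by_cases hij : i = j
  · subst hij
    grind
  · have : i.val ≠ j.val := fun e => hij (Fin.ext e)
    grind

theorem Rbar_row (q xi u : F) (k l i j : Fin (2*n)) (h : i ≠ primeIdx n j) :
    Rbar n q xi u (i, j) (k, l) =
      if i = j then (if k = i ∧ l = i then 1 else 0)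
      else (if k = i ∧ l = j then (u - 1) / (q * u - q⁻¹) else 0)
        + (if k = j ∧ l = i then
            (if i.val < j.val then (q - q⁻¹) * u / (q * u - q⁻¹)
              else (q - q⁻¹) / (q * u - q⁻¹)) else 0) := by
  have h' : j ≠ primeIdx n i := fun e => h (eq_primeIdx_comm.1 e)
  simp only [Rbar, h, false_and, if_false, add_zero]
  by_cases hij : i = j
  · subst hij
    grind
  · have : i.val ≠ j.val := fun e => hij (Fin.ext e)
    grind

/-- On pairs `(l′, l)`, `(j′, j)` only the exceptional block contributes. -/
theorem Rbar_prime (q xi u : F) (l j : Fin (2*n)) :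
    Rbar n q xi u (primeIdx n l, l) (primeIdx n j, j) =
      aEnt n q xi u l j / ((u - q ^ (-2 : ℤ)) * (u - xi)) := by
  simp [Rbar, primeIdx_ne]

theorem Rbar_prime_col (q xi u : F) (k l j : Fin (2*n)) (h : k ≠ primeIdx n l) :
    Rbar n q xi u (k, l) (primeIdx n j, j) = 0 := by
  have h1 := primeIdx_ne j
  have h2 := primeIdx_primeIdx j
  simp only [Rbar, h, false_and, if_false, add_zero]
  grind

theorem Rbar_prime_row (q xi u : F) (k l j : Fin (2*n)) (h : k ≠ primeIdx n l) :
    Rbar n q xi u (primeIdx n j, j) (k, l) = 0 := by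
  have h1 := primeIdx_ne j
  have h2 := primeIdx_primeIdx j
  simp only [Rbar, h, and_false, if_false, add_zero]
  grind

theorem RShape_Rbar (ho : o.val = 0) (q xi u : F) :
    RShape o (Rbar n q xi u) ((u - 1) / (q * u - q⁻¹)) ((q - q⁻¹) * u / (q * u - q⁻¹))
      ((q - q⁻¹) / (q * u - q⁻¹)) where
  oo k l := by
    rw [Rbar_col _ _ _ _ _ _ _ (primeIdx_ne o).symm, if_pos rfl]
  mo k l m hm := by
    rw [Rbar_col _ _ _ _ _ _ _ (hm.ne_prime ho), if_neg (hm.ne ho)]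
    simp [ho]
  om k l m hm := by
    rw [Rbar_col _ _ _ _ _ _ _ (fun e => hm.ne_prime ho (eq_primeIdx_comm.1 e)),
      if_neg (hm.ne ho).symm]
    simp [ho, hm.1]
  ij k l i j hi hj h1 h2 h3 := by
    by_cases h : i = primeIdx n j
    · subst h
      apply Rbar_prime_col
      rintro rfl
      have := @mid_of_ne n o ho l
      have := @Mid.prime n l
      have := @primeIdx_primeIdx n
      grind
    · rw [Rbar_col _ _ _ _ _ _ _ h]
      grind
  op k l h1 h2 h3 := by
    have h0 : Rbar n q xi u (k, l) (primeIdx n (primeIdx n o), primeIdx n o) = 0 := by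
      apply Rbar_prime_col
      rintro rfl
      have := @mid_of_ne n o ho l
      have := @Mid.prime n l
      have := @primeIdx_primeIdx n
      grind
    rwa [primeIdx_primeIdx] at h0

theorem RShape_Rbar_transpose (ho : o.val = 0) (q xi u : F) :
    RShape o (Rbar n q xi u)ᵀ ((u - 1) / (q * u - q⁻¹)) ((q - q⁻¹) / (q * u - q⁻¹))
      ((q - q⁻¹) * u / (q * u - q⁻¹)) where
  oo k l := by
    rw [transpose_apply, Rbar_row _ _ _ _ _ _ _ (primeIdx_ne o).symm, if_pos rfl]
  mo k l m hm := by
    rw [transpose_apply, Rbar_row _ _ _ _ _ _ _ (hm.ne_prime ho), if_neg (hm.ne ho)]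
    simp [ho]
  om k l m hm := by
    rw [transpose_apply, Rbar_row _ _ _ _ _ _ _ (fun e => hm.ne_prime ho (eq_primeIdx_comm.1 e)),
      if_neg (hm.ne ho).symm]
    simp [ho, hm.1]
  ij k l i j hi hj h1 h2 h3 := by
    rw [transpose_apply]
    by_cases h : i = primeIdx n j
    · subst h
      apply Rbar_prime_row
      rintro rfl
      have := @mid_of_ne n o ho l
      have := @Mid.prime n l
      have := @primeIdx_primeIdx n
      grind
    · rw [Rbar_row _ _ _ _ _ _ _ h]
      grind
  op k l h1 h2 h3 := by
    have h0 : Rbar n q xi u (primeIdx n (primeIdx n o), primeIdx n o) (k, l) = 0 := by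
      apply Rbar_prime_row
      rintro rfl
      have := @mid_of_ne n o ho l
      have := @Mid.prime n l
      have := @primeIdx_primeIdx n
      grind
    rwa [primeIdx_primeIdx] at h0

theorem op12_mul_op34 (X Y : Matrix (Fin (2*n) × Fin (2*n)) (Fin (2*n) × Fin (2*n)) F)
    (p : I4 n) (x y z w : Fin (2*n)) :
    (op12 n X * op34 n Y) p (x, y, z, w)
      = X (p.1, p.2.1) (x, y) * Y (p.2.2.1, p.2.2.2) (z, w) := by
  simp [mul_apply, op12, op34, Fintype.sum_prod_type, ite_and]

theorem op12_mul_op34_row (X Y : Matrix (Fin (2*n) × Fin (2*n)) (Fin (2*n) × Fin (2*n)) F)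
    (p : I4 n) (x y z w : Fin (2*n)) :
    (op12 n X * op34 n Y) (x, y, z, w) p
      = X (x, y) (p.1, p.2.1) * Y (z, w) (p.2.2.1, p.2.2.2) := by
  obtain ⟨a, b, c, d⟩ := p
  exact op12_mul_op34 X Y _ _ _ _ _

theorem RhatF_col_oo (q xi : F) (hq : q ≠ 0) (p : Fin (2*n) × Fin (2*n)) :
    RhatF n q xi (q ^ (-2 : ℤ)) p (o, o) = 0 := by
  have h : q * q ^ (-2 : ℤ) - q⁻¹ = 0 := by
    rw [_root_.zpow_neg, zpow_ofNat]; field_simp; ring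
  have := primeIdx_ne o
  simp only [RhatF, h, zero_div]
  grind

theorem RhatF_row_oo (q xi : F) (hq : q ≠ 0) (p : Fin (2*n) × Fin (2*n)) :
    RhatF n q xi (q ^ (-2 : ℤ)) (o, o) p = 0 := by
  have h : q * q ^ (-2 : ℤ) - q⁻¹ = 0 := by
    rw [_root_.zpow_neg, zpow_ofNat]; field_simp; ring
  have := primeIdx_ne o
  simp only [RhatF, h, zero_div]
  grind

theorem Rhat_coeff {q : F} (hq : q ≠ 0) (he1 : q ^ (-2 : ℤ) - 1 ≠ 0) :
    (q - q⁻¹) / (q ^ (-2 : ℤ) - 1) = -q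
      ∧ (q - q⁻¹) * q ^ (-2 : ℤ) / (q ^ (-2 : ℤ) - 1) = -q⁻¹ := by
  constructor <;> rw [div_eq_iff he1, _root_.zpow_neg, zpow_ofNat] <;> field_simp <;> ring

/-- The columns `e_o⊗e_k` and `e_k⊗e_o` of `R̂(q⁻²)` are proportional. -/
theorem RhatF_col_mo (ho : o.val = 0) (q xi : F) (hq : q ≠ 0) (he1 : q ^ (-2 : ℤ) - 1 ≠ 0)
    (p : Fin (2*n) × Fin (2*n)) (k : Fin (2*n)) (hk : Mid k) :
    RhatF n q xi (q ^ (-2 : ℤ)) p (k, o) = -q⁻¹ * RhatF n q xi (q ^ (-2 : ℤ)) p (o, k) := by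
  obtain ⟨x, y⟩ := p
  have h1 := hk.ne ho
  have h2 := hk.ne_prime ho
  have h3 : o ≠ primeIdx n k := fun e => h2 (eq_primeIdx_comm.1 e)
  have h4 := hk.1
  have h5 : q⁻¹ * q = 1 := inv_mul_cancel₀ hq
  obtain ⟨hA, hB⟩ := Rhat_coeff hq he1
  simp only [RhatF, hA, hB, h2, h3, and_false, if_false, add_zero]
  by_cases c1 : x = k ∧ y = o
  · obtain ⟨rfl, rfl⟩ := c1
    simp [h1, h1.symm, h2, ho, h4, hq]
  by_cases c2 : x = o ∧ y = k
  · obtain ⟨rfl, rfl⟩ := c2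
    simp [h1, h1.symm, h3, ho, h4]
  rw [if_neg, if_neg, if_neg, if_neg, if_neg, if_neg, if_neg, if_neg]
  · ring
  all_goals grind

/-- The rows of `R̂(q⁻²)` indexed by `(o, k)` and `(k, o)` are proportional. -/
theorem RhatF_row_mo (ho : o.val = 0) (q xi : F) (hq : q ≠ 0) (he1 : q ^ (-2 : ℤ) - 1 ≠ 0)
    (p : Fin (2*n) × Fin (2*n)) (k : Fin (2*n)) (hk : Mid k) :
    RhatF n q xi (q ^ (-2 : ℤ)) (k, o) p = -q * RhatF n q xi (q ^ (-2 : ℤ)) (o, k) p := by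
  obtain ⟨x, y⟩ := p
  have h1 := hk.ne ho
  have h2 := hk.ne_prime ho
  have h3 : o ≠ primeIdx n k := fun e => h2 (eq_primeIdx_comm.1 e)
  have h4 := hk.1
  have h5 : q * q⁻¹ = 1 := mul_inv_cancel₀ hq
  obtain ⟨hA, hB⟩ := Rhat_coeff hq he1
  simp only [RhatF, hA, hB, h2, h3, false_and, if_false, add_zero]
  by_cases c1 : x = k ∧ y = o
  · obtain ⟨rfl, rfl⟩ := c1
    simp [h1, h1.symm, h2, h3, ho, h4, hq]
  by_cases c2 : x = o ∧ y = k
  · obtain ⟨rfl, rfl⟩ := c2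
    simp [h1, h1.symm, h2, h3, ho, h4]
  rw [if_neg, if_neg, if_neg, if_neg, if_neg, if_neg, if_neg, if_neg]
  · ring
  all_goals grind

end Entries

/-! ### The scalar identities -/

section Scalars
variable {F : Type*} [Field F] {n : ℕ} {o : Fin (2*n)}

theorem aEnt_last_col (ho : o.val = 0) (q xi u : F) (l : Fin (2*n)) (hl : Mid l) :
    aEnt n q xi u l (primeIdx n o) =
      (q ^ (-2 : ℤ) - 1) * (q ^ (barIdx n l - barIdx n (primeIdx n o)) * xi * (u - 1)) := by
  have h : l.val < (primeIdx n o).val := by simp only [primeIdx, ho]; exact hl.2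
  rw [aEnt, if_neg (hl.ne_prime ho), if_pos h, primeIdx_primeIdx, if_neg (hl.ne ho)]
  ring

theorem aEnt_last_row (ho : o.val = 0) (q xi u : F) (j : Fin (2*n)) (hj : Mid j) :
    aEnt n q xi u (primeIdx n o) j =
      (q ^ (-2 : ℤ) - 1) * u * (q ^ (barIdx n (primeIdx n o) - barIdx n j) * (u - 1)) := by
  have h : ¬ (primeIdx n o).val < j.val := by
    have := hj.2
    simp only [primeIdx, ho]; omega
  have h' : primeIdx n o ≠ primeIdx n j := fun e => hj.ne ho <| by
    rw [← primeIdx_primeIdx j, ← e, primeIdx_primeIdx]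
  rw [aEnt, if_neg (hj.ne_prime ho).symm, if_neg h, if_neg h']
  ring

theorem zpow_neg_two (q : F) : q ^ (-2 : ℤ) = (q ^ 2)⁻¹ := by
  rw [_root_.zpow_neg, zpow_ofNat]

/-- The permutation-type coefficients of `R̄(aq⁻²)` without inner fractions; likewise for `R̄(a)`
and `R̄(aq²)` in the two lemmas below. -/
theorem coeff_first (q a : F) (hq : q ≠ 0) (hb : a - 1 ≠ 0) :
    (a * q ^ (-2 : ℤ) - 1) / (q * (a * q ^ (-2 : ℤ)) - q⁻¹) = (a - q ^ 2) / (q * (a - 1))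
    ∧ (q - q⁻¹) / (q * (a * q ^ (-2 : ℤ)) - q⁻¹) = (q ^ 2 - 1) / (a - 1)
    ∧ (q - q⁻¹) * (a * q ^ (-2 : ℤ)) / (q * (a * q ^ (-2 : ℤ)) - q⁻¹)
      = (q ^ 2 - 1) * a / (q ^ 2 * (a - 1)) := by
  have h : q * (a * (q ^ 2)⁻¹) - q⁻¹ = (a - 1) / q := by field_simp
  rw [zpow_neg_two, h]
  refine ⟨?_, ?_, ?_⟩ <;> field_simp

theorem coeff_second (q a : F) (hq : q ≠ 0) (ha : a * q ^ 2 - 1 ≠ 0) :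
    (a - 1) / (q * a - q⁻¹) = (a - 1) * q / (a * q ^ 2 - 1)
    ∧ (q - q⁻¹) / (q * a - q⁻¹) = (q ^ 2 - 1) / (a * q ^ 2 - 1)
    ∧ (q - q⁻¹) * a / (q * a - q⁻¹) = (q ^ 2 - 1) * a / (a * q ^ 2 - 1)
    ∧ (a * q⁻¹ - q) / (a * q - q⁻¹) = (a - q ^ 2) / (a * q ^ 2 - 1) := by
  have h : q * a - q⁻¹ = (a * q ^ 2 - 1) / q := by field_simp
  have h' : a * q - q⁻¹ = (a * q ^ 2 - 1) / q := by field_simp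
  rw [h, h']
  refine ⟨?_, ?_, ?_, ?_⟩ <;> field_simp

theorem coeff_third (q a : F) (hq : q ≠ 0) (hc : a * q ^ 4 - 1 ≠ 0) :
    (a * q ^ 2 - 1) / (q * (a * q ^ 2) - q⁻¹) = (a * q ^ 2 - 1) * q / (a * q ^ 4 - 1)
    ∧ (q - q⁻¹) / (q * (a * q ^ 2) - q⁻¹) = (q ^ 2 - 1) / (a * q ^ 4 - 1)
    ∧ (q - q⁻¹) * (a * q ^ 2) / (q * (a * q ^ 2) - q⁻¹)
      = (q ^ 2 - 1) * (a * q ^ 2) / (a * q ^ 4 - 1) := by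
  have h : q * (a * q ^ 2) - q⁻¹ = (a * q ^ 4 - 1) / q := by field_simp
  rw [h]
  refine ⟨?_, ?_, ?_⟩ <;> field_simp

theorem denom_first (q a xi : F) (hq : q ≠ 0) :
    (a * q ^ (-2 : ℤ) - q ^ (-2 : ℤ)) * (a * q ^ (-2 : ℤ) - xi)
      = (a - 1) * (a - xi * q ^ 2) / q ^ 4 := by
  rw [zpow_neg_two]; field_simp

theorem denom_second (q a xi : F) (hq : q ≠ 0) :
    (a - q ^ (-2 : ℤ)) * (a - xi) = (a * q ^ 2 - 1) * (a - xi) / q ^ 2 := by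
  rw [zpow_neg_two]; field_simp

/-- The hypothesis `hkey` of `fusion_reduction` for `R̄` and `c = -q⁻¹`, with the coefficients in
the form given by `coeff_first`, `coeff_second` and `coeff_third`. -/
theorem key_col (ho : o.val = 0) (q a xi : F) (hq : q ≠ 0)
    (ha : a * q ^ 2 - 1 ≠ 0) (hb : a - 1 ≠ 0) (hc : a * q ^ 4 - 1 ≠ 0)
    (hx : a - xi ≠ 0) (hx2 : a - xi * q ^ 2 ≠ 0)
    (i j k l : Fin (2*n)) (hj : Mid j) (hl : Mid l) :
    ((a * q ^ 2 - 1) * q / (a * q ^ 4 - 1)) * ((a - q ^ 2) / (q * (a - 1)))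
        * Rbar n q xi a (k, l) (i, j)
      + ((a * q ^ 2 - 1) * q / (a * q ^ 4 - 1)) * (-q⁻¹) * Rbar n q xi a (o, primeIdx n o) (i, j)
        * Rbar n q xi (a * q ^ (-2 : ℤ)) (k, l) (o, primeIdx n o)
      + ((q ^ 2 - 1) * (a * q ^ 2) / (a * q ^ 4 - 1)) * ((q ^ 2 - 1) / (a * q ^ 2 - 1)) * ((a - 1) * q / (a * q ^ 2 - 1))
        * (-q⁻¹)
        * Rbar n q xi (a * q ^ (-2 : ℤ)) (k, l) (i, j)
      + (if k = j ∧ l = i then ((q ^ 2 - 1) * (a * q ^ 2) / (a * q ^ 4 - 1))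
          * (((a - 1) * q / (a * q ^ 2 - 1)) ^ 2 * ((q ^ 2 - 1) / (a - 1)) * (-q⁻¹) ^ 2
            + ((a - 1) * q / (a * q ^ 2 - 1))
              * ((q ^ 2 - 1) / (a * q ^ 2 - 1)) * (-q⁻¹)
            + ((q ^ 2 - 1) / (a * q ^ 2 - 1)) ^ 2 * ((q ^ 2 - 1) * a / (q ^ 2 * (a - 1)))) else 0)
    = ((a - q ^ 2) / (a * q ^ 2 - 1)) * Rbar n q (xi * q ^ 2) a (k, l) (i, j) := by
  have hx2' : a - q ^ 2 * xi ≠ 0 := by rwa [mul_comm (q ^ 2)]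
  obtain ⟨A1, A2, A3⟩ := coeff_first q a hq hb
  obtain ⟨B1, B2, B3, -⟩ := coeff_second q a hq ha
  by_cases hij : i = primeIdx n j
  · subst hij
    by_cases hkl : k = primeIdx n l
    · subst hkl
      have hoo : ((o, primeIdx n o) : Fin (2*n) × Fin (2*n))
          = (primeIdx n (primeIdx n o), primeIdx n o) := by rw [primeIdx_primeIdx]
      -- the exponents of the two extreme entries add up to that of the middle entry
      obtain ⟨U, hU⟩ : ∃ U, U = q ^ (barIdx n l - barIdx n (primeIdx n o)) := ⟨_, rfl⟩
      obtain ⟨W, hW⟩ : ∃ W, W = q ^ (barIdx n (primeIdx n o) - barIdx n j) := ⟨_, rfl⟩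
      have hUW : q ^ (barIdx n l - barIdx n j) = U * W := by
        rw [hU, hW, ← zpow_add₀ hq]; congr 1; ring
      have hU0 : U ≠ 0 := hU ▸ zpow_ne_zero _ hq
      have hcond : (primeIdx n l = j ∧ l = primeIdx n j) ↔ l = primeIdx n j :=
        ⟨And.right, fun h => ⟨by rw [h, primeIdx_primeIdx], h⟩⟩
      rw [hoo]
      simp only [Rbar_prime, hcond, aEnt_last_row ho _ _ _ _ hj,
        aEnt_last_col ho _ _ _ _ hl,
        denom_first _ _ _ hq, denom_second _ _ _ hq, ← hU, ← hW]
      rcases lt_trichotomy l.val j.val with h | h | h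
      · have hne : l ≠ j := fun e => by rw [e] at h; exact lt_irrefl _ h
        by_cases hp : l = primeIdx n j
        · simp only [aEnt, if_neg hne, if_pos h, if_pos hp, hUW, zpow_neg_two]
          field_simp
          ring
        · simp only [aEnt, if_neg hne, if_pos h, if_neg hp, hUW, zpow_neg_two]
          field_simp
          ring
      · obtain rfl : l = j := Fin.ext h
        have hW' : W = U⁻¹ :=
          eq_inv_of_mul_eq_one_right (by rw [← hUW, sub_self, zpow_zero])
        simp only [aEnt, if_pos, if_neg (primeIdx_ne l).symm, hW', zpow_neg_two]
        field_simp
        ring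
      · have hne : l ≠ j := fun e => by rw [e] at h; exact lt_irrefl _ h
        by_cases hp : l = primeIdx n j
        · simp only [aEnt, if_neg hne, if_neg h.not_gt, if_pos hp, hUW, zpow_neg_two]
          field_simp
          ring
        · simp only [aEnt, if_neg hne, if_neg h.not_gt, if_neg hp, hUW, zpow_neg_two]
          field_simp
          ring
    · have h1 : ¬ (k = j ∧ l = primeIdx n j) := by
        rintro ⟨rfl, rfl⟩; exact hkl (primeIdx_primeIdx _).symm
      have h2 := Rbar_prime_col q xi (a * q ^ (-2 : ℤ)) k l (primeIdx n o) hkl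
      rw [primeIdx_primeIdx] at h2
      rw [Rbar_prime_col _ _ _ _ _ _ hkl, Rbar_prime_col _ _ _ _ _ _ hkl,
        Rbar_prime_col _ _ _ _ _ _ hkl, h2, if_neg h1]
      ring
  · have h1 : Rbar n q xi a (o, primeIdx n o) (i, j) = 0 := by
      have h2 := Rbar_prime_row q xi a i j (primeIdx n o) hij
      rwa [primeIdx_primeIdx] at h2
    rw [h1, Rbar_col _ _ _ _ _ _ _ hij, Rbar_col _ _ _ _ _ _ _ hij, Rbar_col _ _ _ _ _ _ _ hij,
      A1, A2, A3, B1, B2, B3]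
    by_cases e : i = j
    · subst e
      by_cases h : k = i ∧ l = i
      · simp only [if_pos h, if_true]
        field_simp
        ring
      · simp only [if_neg h, if_true]
        ring
    · simp only [if_neg e]
      by_cases h : k = i ∧ l = j
      · have h' : ¬ (k = j ∧ l = i) := fun h' => e (h.1.symm.trans h'.1)
        simp only [if_pos h, if_neg h']
        field_simp
        ring
      · by_cases h' : k = j ∧ l = i
        · simp only [if_neg h, if_pos h']
          split_ifs
          · field_simp
            ring
          · field_simp
            ring
        · simp only [if_neg h, if_neg h']
          ring

/-- The hypothesis `hkey` of `fusion_reduction` for the transpose of `R̄` and `c = -q`, with the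
coefficients in the form given by `coeff_first`, `coeff_second` and `coeff_third`. -/
theorem key_row (ho : o.val = 0) (q a xi : F) (hq : q ≠ 0)
    (ha : a * q ^ 2 - 1 ≠ 0) (hb : a - 1 ≠ 0) (hc : a * q ^ 4 - 1 ≠ 0)
    (hx : a - xi ≠ 0) (hx2 : a - xi * q ^ 2 ≠ 0)
    (i j k l : Fin (2*n)) (hj : Mid j) (hl : Mid l) :
    ((a * q ^ 2 - 1) * q / (a * q ^ 4 - 1)) * ((a - q ^ 2) / (q * (a - 1)))
        * Rbar n q xi a (i, j) (k, l)
      + ((a * q ^ 2 - 1) * q / (a * q ^ 4 - 1)) * (-q) * Rbar n q xi a (i, j) (o, primeIdx n o)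
        * Rbar n q xi (a * q ^ (-2 : ℤ)) (o, primeIdx n o) (k, l)
      + ((q ^ 2 - 1) / (a * q ^ 4 - 1)) * ((q ^ 2 - 1) * a / (a * q ^ 2 - 1)) * ((a - 1) * q / (a * q ^ 2 - 1))
        * (-q)
        * Rbar n q xi (a * q ^ (-2 : ℤ)) (i, j) (k, l)
      + (if k = j ∧ l = i then ((q ^ 2 - 1) / (a * q ^ 4 - 1))
          * (((a - 1) * q / (a * q ^ 2 - 1)) ^ 2 * ((q ^ 2 - 1) * a / (q ^ 2 * (a - 1))) * (-q) ^ 2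
            + ((a - 1) * q / (a * q ^ 2 - 1))
              * ((q ^ 2 - 1) * a / (a * q ^ 2 - 1)) * (-q)
            + ((q ^ 2 - 1) * a / (a * q ^ 2 - 1)) ^ 2 * ((q ^ 2 - 1) / (a - 1))) else 0)
    = ((a - q ^ 2) / (a * q ^ 2 - 1)) * Rbar n q (xi * q ^ 2) a (i, j) (k, l) := by
  have hx2' : a - q ^ 2 * xi ≠ 0 := by rwa [mul_comm (q ^ 2)]
  obtain ⟨A1, A2, A3⟩ := coeff_first q a hq hb
  obtain ⟨B1, B2, B3, -⟩ := coeff_second q a hq ha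
  by_cases hij : i = primeIdx n j
  · subst hij
    by_cases hkl : k = primeIdx n l
    · subst hkl
      have hoo : ((o, primeIdx n o) : Fin (2*n) × Fin (2*n))
          = (primeIdx n (primeIdx n o), primeIdx n o) := by rw [primeIdx_primeIdx]
      -- the exponents of the two extreme entries add up to that of the middle entry
      obtain ⟨U, hU⟩ : ∃ U, U = q ^ (barIdx n j - barIdx n (primeIdx n o)) := ⟨_, rfl⟩
      obtain ⟨W, hW⟩ : ∃ W, W = q ^ (barIdx n (primeIdx n o) - barIdx n l) := ⟨_, rfl⟩
      have hUW : q ^ (barIdx n j - barIdx n l) = U * W := by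
        rw [hU, hW, ← zpow_add₀ hq]; congr 1; ring
      have hU0 : U ≠ 0 := hU ▸ zpow_ne_zero _ hq
      have hcond : (primeIdx n l = j ∧ l = primeIdx n j) ↔ l = primeIdx n j :=
        ⟨And.right, fun h => ⟨by rw [h, primeIdx_primeIdx], h⟩⟩
      rw [hoo]
      simp only [Rbar_prime, hcond, aEnt_last_row ho _ _ _ _ hl,
        aEnt_last_col ho _ _ _ _ hj,
        denom_first _ _ _ hq, denom_second _ _ _ hq, ← hU, ← hW]
      rcases lt_trichotomy j.val l.val with h | h | h
      · have hne : j ≠ l := fun e => by rw [e] at h; exact lt_irrefl _ h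
        by_cases hp : l = primeIdx n j
        · have hp2 := eq_primeIdx_comm.1 hp
          simp only [aEnt, if_neg hne, if_pos h, if_pos hp, if_pos hp2, hUW, zpow_neg_two]
          field_simp
          ring
        · have hp2 := fun e => hp (eq_primeIdx_comm.1 e)
          simp only [aEnt, if_neg hne, if_pos h, if_neg hp, if_neg hp2, hUW, zpow_neg_two]
          field_simp
          ring
      · obtain rfl : l = j := Fin.ext h.symm
        have hW' : W = U⁻¹ :=
          eq_inv_of_mul_eq_one_right (by rw [← hUW, sub_self, zpow_zero])
        simp only [aEnt, if_pos, if_neg (primeIdx_ne l).symm, hW', zpow_neg_two]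
        field_simp
        ring
      · have hne : j ≠ l := fun e => by rw [e] at h; exact lt_irrefl _ h
        by_cases hp : l = primeIdx n j
        · have hp2 := eq_primeIdx_comm.1 hp
          simp only [aEnt, if_neg hne, if_neg h.not_gt, if_pos hp, if_pos hp2, hUW, zpow_neg_two]
          field_simp
          ring
        · have hp2 := fun e => hp (eq_primeIdx_comm.1 e)
          simp only [aEnt, if_neg hne, if_neg h.not_gt, if_neg hp, if_neg hp2, hUW, zpow_neg_two]
          field_simp
          ring
    · have h1 : ¬ (k = j ∧ l = primeIdx n j) := by
        rintro ⟨rfl, rfl⟩; exact hkl (primeIdx_primeIdx _).symm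
      have h2 := Rbar_prime_row q xi (a * q ^ (-2 : ℤ)) k l (primeIdx n o) hkl
      rw [primeIdx_primeIdx] at h2
      rw [Rbar_prime_row _ _ _ _ _ _ hkl, Rbar_prime_row _ _ _ _ _ _ hkl,
        Rbar_prime_row _ _ _ _ _ _ hkl, h2, if_neg h1]
      ring
  · have h1 : Rbar n q xi a (i, j) (o, primeIdx n o) = 0 := by
      have h2 := Rbar_prime_col q xi a i j (primeIdx n o) hij
      rwa [primeIdx_primeIdx] at h2
    rw [h1, Rbar_row _ _ _ _ _ _ _ hij, Rbar_row _ _ _ _ _ _ _ hij, Rbar_row _ _ _ _ _ _ _ hij,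
      A1, A2, A3, B1, B2, B3]
    by_cases e : i = j
    · subst e
      by_cases h : k = i ∧ l = i
      · simp only [if_pos h, if_true]
        field_simp
        ring
      · simp only [if_neg h, if_true]
        ring
    · simp only [if_neg e]
      by_cases h : k = i ∧ l = j
      · have h' : ¬ (k = j ∧ l = i) := fun h' => e (h.1.symm.trans h'.1)
        simp only [if_pos h, if_neg h']
        field_simp
        ring
      · by_cases h' : k = j ∧ l = i
        · simp only [if_neg h, if_pos h']
          split_ifs
          · field_simp
            ring
          · field_simp
            ring
        · simp only [if_neg h, if_neg h']
          ring

end Scalars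

/-! ### Transposition and the smaller R-matrix -/

section Main
variable {F : Type*} [Field F] {n : ℕ} {o : Fin (2*n)}

theorem op_transpose (X : Matrix (Fin (2*n) × Fin (2*n)) (Fin (2*n) × Fin (2*n)) F) :
    (op14 n X)ᵀ = op14 n Xᵀ ∧ (op24 n X)ᵀ = op24 n Xᵀ ∧ (op13 n X)ᵀ = op13 n Xᵀ
      ∧ (op23 n X)ᵀ = op23 n Xᵀ := by
  refine ⟨?_, ?_, ?_, ?_⟩ <;> ext p r <;>
    simp only [transpose_apply, op14, op24, op13, op23, eq_comm]

theorem RbarSub_eq_zero (q u : F) (p r : Fin (2*n) × Fin (2*n))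
    (h : ¬ (Mid p.1 ∧ Mid p.2) ∨ ¬ (Mid r.1 ∧ Mid r.2)) : RbarSub n q u p r = 0 := by
  simp only [Mid] at h
  rw [RbarSub, if_neg]
  tauto

theorem RbarSub_eq (q u : F) (p r : Fin (2*n) × Fin (2*n))
    (h1 : Mid p.1) (h2 : Mid p.2) (h3 : Mid r.1) (h4 : Mid r.2) :
    RbarSub n q u p r = Rbar n q (xiVal n q * q ^ 2) u p r := by
  rw [RbarSub, if_pos]
  exact ⟨h1.1, h1.2, h2.1, h2.2, h3.1, h3.2, h4.1, h4.2⟩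

end Main

/-- The fusion identities
`R̂₁₂ R̂₃₄ R̄₁₄(aq^{−2}) R̄₂₄(a) R̄₁₃(a) R̄₂₃(aq²) |1,i,1,j⟩
  = ((aq^{−1}−q)/(aq−q^{−1})) R̂₁₂ R̂₃₄ R̄^{[n−1]}₂₄(a) |1,i,1,j⟩` and
`⟨1,i,1,j| R̄₂₃(aq²) R̄₁₃(a) R̄₂₄(a) R̄₁₄(aq^{−2}) R̂₁₂ R̂₃₄
  = ((aq^{−1}−q)/(aq−q^{−1})) ⟨1,i,1,j| R̄^{[n−1]}₂₄(a) R̂₁₂ R̂₃₄`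
for `2 ≤ i, j ≤ 2n−1`, where `R̂ = R̂(q^{−2})`. -/
theorem fusion_identities
    {F : Type*} [Field F] (n : ℕ) (hn : 2 ≤ n) (q a : F) (hq : q ≠ 0)
    (ha1 : q * a - q⁻¹ ≠ 0) (ha2 : a - q ^ (-2 : ℤ) ≠ 0) (ha3 : a - xiVal n q ≠ 0)
    (hb1 : q * (a * q ^ (-2 : ℤ)) - q⁻¹ ≠ 0) (hb2 : a * q ^ (-2 : ℤ) - q ^ (-2 : ℤ) ≠ 0)
    (hb3 : a * q ^ (-2 : ℤ) - xiVal n q ≠ 0)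
    (hc1 : q * (a * q ^ 2) - q⁻¹ ≠ 0) (hc2 : a * q ^ 2 - q ^ (-2 : ℤ) ≠ 0)
    (hc3 : a * q ^ 2 - xiVal n q ≠ 0)
    (hd1 : a - xiVal n q * q ^ 2 ≠ 0)
    (he1 : q ^ (-2 : ℤ) - 1 ≠ 0) (he2 : q ^ (-2 : ℤ) - xiVal n q ≠ 0) :
    ∀ i j : Fin (2*n), 0 < i.val → i.val < 2*n - 1 → 0 < j.val → j.val < 2*n - 1 →
      ((op12 n (RhatF n q (xiVal n q) (q ^ (-2 : ℤ)))
          * op34 n (RhatF n q (xiVal n q) (q ^ (-2 : ℤ)))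
          * op14 n (Rbar n q (xiVal n q) (a * q ^ (-2 : ℤ)))
          * op24 n (Rbar n q (xiVal n q) a)
          * op13 n (Rbar n q (xiVal n q) a)
          * op23 n (Rbar n q (xiVal n q) (a * q ^ 2))) *ᵥ
            Pi.single ((⟨0, by omega⟩ : Fin (2*n)), i, (⟨0, by omega⟩ : Fin (2*n)), j) (1 : F)
        = ((a * q⁻¹ - q) / (a * q - q⁻¹)) •
          ((op12 n (RhatF n q (xiVal n q) (q ^ (-2 : ℤ)))
            * op34 n (RhatF n q (xiVal n q) (q ^ (-2 : ℤ)))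
            * op24 n (RbarSub n q a)) *ᵥ
              Pi.single ((⟨0, by omega⟩ : Fin (2*n)), i, (⟨0, by omega⟩ : Fin (2*n)), j) (1 : F)))
      ∧ (Pi.single ((⟨0, by omega⟩ : Fin (2*n)), i, (⟨0, by omega⟩ : Fin (2*n)), j) (1 : F) ᵥ*
          (op23 n (Rbar n q (xiVal n q) (a * q ^ 2))
            * op13 n (Rbar n q (xiVal n q) a)
            * op24 n (Rbar n q (xiVal n q) a)
            * op14 n (Rbar n q (xiVal n q) (a * q ^ (-2 : ℤ)))
            * op12 n (RhatF n q (xiVal n q) (q ^ (-2 : ℤ)))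
            * op34 n (RhatF n q (xiVal n q) (q ^ (-2 : ℤ))))
        = ((a * q⁻¹ - q) / (a * q - q⁻¹)) •
          (Pi.single ((⟨0, by omega⟩ : Fin (2*n)), i, (⟨0, by omega⟩ : Fin (2*n)), j) (1 : F) ᵥ*
            (op24 n (RbarSub n q a)
              * op12 n (RhatF n q (xiVal n q) (q ^ (-2 : ℤ)))
              * op34 n (RhatF n q (xiVal n q) (q ^ (-2 : ℤ)))))) := by
  intro i j hi0 hi1 hj0 hj1
  have hi : Mid i := ⟨hi0, hi1⟩
  have hj : Mid j := ⟨hj0, hj1⟩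
  obtain ⟨o, ho'⟩ : ∃ o : Fin (2*n), o = ⟨0, by omega⟩ := ⟨_, rfl⟩
  have ho : o.val = 0 := by rw [ho']
  rw [← ho']
  have hA : a * q ^ 2 - 1 ≠ 0 := fun h => ha1 <| by
    have : q * a - q⁻¹ = (a * q ^ 2 - 1) / q := by field_simp
    rw [this, h, zero_div]
  have hB : a - 1 ≠ 0 := fun h => hb2 <| by
    rw [sub_eq_zero.1 h, one_mul, sub_self]
  have hC : a * q ^ 4 - 1 ≠ 0 := fun h => hc1 <| by
    have : q * (a * q ^ 2) - q⁻¹ = (a * q ^ 4 - 1) / q := by field_simp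
    rw [this, h, zero_div]
  obtain ⟨a1, a2, a3⟩ := coeff_first q a hq hB
  obtain ⟨b1, b2, b3, hκ⟩ := coeff_second q a hq hA
  obtain ⟨c1, c2, c3⟩ := coeff_third q a hq hC
  constructor
  · have s1 := RShape_Rbar ho q (xiVal n q) (a * q ^ (-2 : ℤ))
    have s2 := RShape_Rbar ho q (xiVal n q) a
    have s3 := RShape_Rbar ho q (xiVal n q) (a * q ^ 2)
    rw [a1, a2, a3] at s1
    rw [b1, b2, b3] at s2
    rw [c1, c2, c3] at s3
    funext p
    rw [Pi.smul_apply, smul_eq_mul, mulVec_single_one, mulVec_single_one, hκ]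
    -- the `p`-th row of `R̂₁₂R̂₃₄` as a functional on `V^{⊗4}`
    have main := fusion_reduction (c := -q⁻¹) (κ := (a - q ^ 2) / (a * q ^ 2 - 1))
      (T := RbarSub n q a) ho s1 s2 s3
      ((op12 n (RhatF n q (xiVal n q) (q ^ (-2 : ℤ)))
        * op34 n (RhatF n q (xiVal n q) (q ^ (-2 : ℤ)))) p)
      (fun x y => by rw [op12_mul_op34, RhatF_col_oo _ _ hq, zero_mul])
      (fun x y => by rw [op12_mul_op34, RhatF_col_oo _ _ hq, mul_zero])
      (fun k x y hk => by
        rw [op12_mul_op34, op12_mul_op34, RhatF_col_mo ho _ _ hq he1 _ _ hk, mul_assoc])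
      (fun k x y hk => by
        rw [op12_mul_op34, op12_mul_op34, RhatF_col_mo ho _ _ hq he1 _ _ hk]; ring)
      i j hi hj (fun k l h => RbarSub_eq_zero _ _ _ _ (Or.inl h))
      (fun k l hk hl => by
        rw [RbarSub_eq _ _ _ _ hk hl hi hj]
        exact key_col ho q a (xiVal n q) hq hA hB hC ha3 hd1 i j k l hj hl)
    rw [← mul_apply_eq_vecMul, ← mul_apply_eq_vecMul] at main
    simpa only [mul_assoc, col_apply] using main
  · have s1 := RShape_Rbar_transpose ho q (xiVal n q) (a * q ^ (-2 : ℤ))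
    have s2 := RShape_Rbar_transpose ho q (xiVal n q) a
    have s3 := RShape_Rbar_transpose ho q (xiVal n q) (a * q ^ 2)
    rw [a1, a2, a3] at s1
    rw [b1, b2, b3] at s2
    rw [c1, c2, c3] at s3
    funext p
    rw [Pi.smul_apply, smul_eq_mul, single_one_vecMul, single_one_vecMul, hκ]
    -- the `p`-th column of `R̂₁₂R̂₃₄` as a functional on `V^{⊗4}`
    have main := fusion_reduction (c := -q) (κ := (a - q ^ 2) / (a * q ^ 2 - 1))
      (T := (RbarSub n q a)ᵀ) ho s1 s2 s3
      ((op12 n (RhatF n q (xiVal n q) (q ^ (-2 : ℤ)))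
        * op34 n (RhatF n q (xiVal n q) (q ^ (-2 : ℤ))))ᵀ p)
      (fun x y => by rw [transpose_apply, op12_mul_op34_row, RhatF_row_oo _ _ hq, zero_mul])
      (fun x y => by rw [transpose_apply, op12_mul_op34_row, RhatF_row_oo _ _ hq, mul_zero])
      (fun k x y hk => by
        rw [transpose_apply, transpose_apply, op12_mul_op34_row, op12_mul_op34_row,
          RhatF_row_mo ho _ _ hq he1 _ _ hk, mul_assoc])
      (fun k x y hk => by
        rw [transpose_apply, transpose_apply, op12_mul_op34_row, op12_mul_op34_row,
          RhatF_row_mo ho _ _ hq he1 _ _ hk]; ring)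
      i j hi hj (fun k l h => RbarSub_eq_zero _ _ _ _ (Or.inr h))
      (fun k l hk hl => by
        rw [transpose_apply (RbarSub n q a), RbarSub_eq _ _ _ _ hi hj hk hl]
        exact key_row ho q a (xiVal n q) hq hA hB hC ha3 hd1 i j k l hj hl)
    rw [← mul_apply_eq_vecMul, ← mul_apply_eq_vecMul] at main
    rw [← (op_transpose _).1, ← (op_transpose _).2.1, ← (op_transpose _).2.1,
      ← (op_transpose _).2.2.1, ← (op_transpose _).2.2.2] at main
    simp only [← transpose_mul, transpose_apply] at main
    simpa only [mul_assoc, row_apply] using main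

end
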